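/- arXiv:2012.12034 — 2 statements merged into one kernel-verified Lean document; each statement's English description precedes it below -/
import Mathlib

section
/- Let T and S be bounded linear operators on H each admitting an A-adjoint. Then ω_A(TS) ≤ (1/2) · ω_A(ST) + (1/4) · ‖S S^{♯_A} + T^{♯_A} T‖_A. -/
noncomputable section

open ContinuousLinearMap

variable {H : Type*} [NormedAddCommGroup H] [InnerProductSpace ℂ H] [CompleteSpace H]

/-- The semi-inner product induced by the positive operator `A`: `⟨x, y⟩_A := ⟨A x, y⟩`. -/
def innA (A : H →L[ℂ] H) (x y : H) : ℂ := inner ℂ (A x) y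

/-- The seminorm induced by `A`: `‖x‖_A := ⟨x, x⟩_A ^ (1/2)`. -/
def vnormA (A : H →L[ℂ] H) (x : H) : ℝ := Real.sqrt (innA A x x).re

/-- The `A`-operator seminorm: `‖T‖_A := sup {‖T x‖_A : ‖x‖_A = 1}`. -/
def opNormA (A T : H →L[ℂ] H) : ℝ :=
  sSup {c : ℝ | ∃ x : H, vnormA A x = 1 ∧ c = vnormA A (T x)}

/-- The `A`-numerical radius: `ω_A(T) := sup {|⟨T x, x⟩_A| : ‖x‖_A = 1}`. -/
def wA (A T : H →L[ℂ] H) : ℝ :=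
  sSup {c : ℝ | ∃ x : H, vnormA A x = 1 ∧ c = ‖innA A (T x) x‖}

/-- `T` admits an `A`-adjoint: there is a bounded operator `X` with `A X = T* A`. -/
def HasAAdjoint (A T : H →L[ℂ] H) : Prop :=
  ∃ X : H →L[ℂ] H, A ∘L X = adjoint T ∘L A

/-- `X` is the reduced `A`-adjoint `T^{♯_A}` of `T`: it solves `A X = T* A` and its range
is contained in the closure of the range of `A`. -/
def IsReducedAAdjoint (A T X : H →L[ℂ] H) : Prop :=
  (A ∘L X = adjoint T ∘L A) ∧ ∀ y : H, X y ∈ closure (Set.range A)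

/-- Cauchy–Schwarz for the sesquilinear form of a positive operator. -/
theorem norm_innA_sq_le {B : H →L[ℂ] H} (hB : B.IsPositive) (x y : H) :
    ‖innA B x y‖ ^ 2 ≤ (innA B x x).re * (innA B y y).re := by
  let c : PreInnerProductSpace.Core ℂ H :=
    { inner := innA B
      conj_inner_symm := fun x y => by
        simp only [innA]
        rw [inner_conj_symm, hB.inner_left_eq_inner_right]
      re_inner_nonneg := fun x => hB.re_inner_nonneg_left x
      add_left := fun x y z => by simp [innA]
      smul_left := fun x y r => by simp [innA, mul_comm] }
  have h := @InnerProductSpace.Core.inner_mul_inner_self_le ℂ H _ _ _ c x y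
  have h2 := @InnerProductSpace.Core.norm_inner_symm ℂ H _ _ _ c x y
  rw [← h2, ← sq] at h
  exact h

theorem innA_add_left (A : H →L[ℂ] H) (x y z : H) :
    innA A (x + y) z = innA A x z + innA A y z := by
  simp [innA]

theorem innA_add_right (A : H →L[ℂ] H) (x y z : H) :
    innA A x (y + z) = innA A x y + innA A x z := by
  simp [innA]

theorem innA_sub_left (A : H →L[ℂ] H) (x y z : H) :
    innA A (x - y) z = innA A x z - innA A y z := by
  simp [innA]

theorem innA_smul_left (A : H →L[ℂ] H) (r : ℂ) (x y : H) :
    innA A (r • x) y = starRingEnd ℂ r * innA A x y := by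
  simp [innA, mul_comm]

theorem innA_smul_right (A : H →L[ℂ] H) (r : ℂ) (x y : H) :
    innA A x (r • y) = r * innA A x y := by
  simp [innA]

theorem innA_conj_symm {A : H →L[ℂ] H} (hA : A.IsPositive) (x y : H) :
    starRingEnd ℂ (innA A y x) = innA A x y := by
  simp only [innA]
  rw [inner_conj_symm, hA.inner_left_eq_inner_right]

theorem re_innA_comm {A : H →L[ℂ] H} (hA : A.IsPositive) (x y : H) :
    (innA A x y).re = (innA A y x).re := by
  rw [← innA_conj_symm hA, Complex.conj_re]

theorem vnormA_nonneg (A : H →L[ℂ] H) (x : H) : 0 ≤ vnormA A x := Real.sqrt_nonneg _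

theorem vnormA_sq {A : H →L[ℂ] H} (hA : A.IsPositive) (x : H) :
    vnormA A x ^ 2 = (innA A x x).re :=
  Real.sq_sqrt (hA.re_inner_nonneg_left x)

theorem norm_innA_le {A : H →L[ℂ] H} (hA : A.IsPositive) (x y : H) :
    ‖innA A x y‖ ≤ vnormA A x * vnormA A y := by
  refine le_of_sq_le_sq ?_ (mul_nonneg (vnormA_nonneg A x) (vnormA_nonneg A y))
  rw [mul_pow, vnormA_sq hA, vnormA_sq hA]
  exact norm_innA_sq_le hA x y

theorem re_innA_le {A : H →L[ℂ] H} (hA : A.IsPositive) (x y : H) :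
    (innA A x y).re ≤ vnormA A x * vnormA A y :=
  (Complex.re_le_norm _).trans (norm_innA_le hA x y)

theorem vnormA_smul (A : H →L[ℂ] H) (r : ℂ) (x : H) :
    vnormA A (r • x) = ‖r‖ * vnormA A x := by
  unfold vnormA
  rw [innA_smul_left, innA_smul_right, ← mul_assoc, ← Complex.normSq_eq_conj_mul_self,
    Complex.re_ofReal_mul, Real.sqrt_mul (Complex.normSq_nonneg r), Complex.norm_def]

theorem vnormA_le_norm (A : H →L[ℂ] H) (x : H) :
    vnormA A x ≤ √‖A‖ * ‖x‖ := by
  rw [← Real.sqrt_sq (norm_nonneg x), ← Real.sqrt_mul (norm_nonneg A)]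
  refine Real.sqrt_le_sqrt ((Complex.re_le_norm _).trans ((norm_inner_le_norm _ _).trans ?_))
  calc ‖A x‖ * ‖x‖ ≤ ‖A‖ * ‖x‖ * ‖x‖ := by gcongr; exact A.le_opNorm x
    _ = ‖A‖ * ‖x‖ ^ 2 := by ring

theorem IsReducedAAdjoint.innA_apply_left {A T X : H →L[ℂ] H} (hA : A.IsPositive)
    (h : IsReducedAAdjoint A T X) (u v : H) : innA A (T u) v = innA A u (X v) := by
  have hv : A (X v) = adjoint T (A v) := congrArg (fun R : H →L[ℂ] H => R v) h.1
  simp only [innA]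
  rw [hA.inner_left_eq_inner_right, hA.inner_left_eq_inner_right, hv, adjoint_inner_right]

theorem le_of_pow_two_pow_le {a b C : ℝ} (hb : 0 ≤ b)
    (h : ∀ n : ℕ, a ^ 2 ^ n ≤ C * b ^ 2 ^ n) : a ≤ b := by
  by_contra! hab
  have ha : 0 < a := hb.trans_lt hab
  have hlim : Filter.Tendsto (fun n : ℕ => C * (b / a) ^ 2 ^ n) Filter.atTop (nhds (C * 0)) :=
    ((tendsto_pow_atTop_nhds_zero_of_lt_one (div_nonneg hb ha.le)
      ((div_lt_one ha).2 hab)).comp (tendsto_pow_atTop_atTop_of_one_lt one_lt_two)).const_mul C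
  have h1 : (1 : ℝ) ≤ C * 0 := ge_of_tendsto' hlim fun n => by
    rw [div_pow, ← mul_div_assoc, le_div_iff₀ (pow_pos ha _), one_mul]
    exact h n
  norm_num at h1

/-- An `A`-selfadjoint operator is bounded for the seminorm of `A`. -/
theorem vnormA_apply_le_of_selfadjoint {A R : H →L[ℂ] H} (hA : A.IsPositive)
    (hR : ∀ u v, innA A (R u) v = innA A u (R v)) (x : H) :
    vnormA A (R x) ≤ ‖R‖ * vnormA A x := by
  have hRn : ∀ (n : ℕ) (u v : H), innA A ((R ^ n) u) v = innA A u ((R ^ n) v) := by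
    intro n
    induction n with
    | zero => intro u v; simp
    | succ n ih =>
      intro u v
      rw [pow_succ, mul_apply_eq_comp, ih, hR, ← mul_apply_eq_comp, ← pow_succ', ← pow_succ]
  have hstep : ∀ n : ℕ, vnormA A ((R ^ n) x) ^ 2 ≤ vnormA A ((R ^ (2 * n)) x) * vnormA A x := by
    intro n
    rw [vnormA_sq hA, hRn, ← mul_apply_eq_comp, ← pow_add, ← two_mul, re_innA_comm hA]
    exact re_innA_le hA _ _
  have hiter : ∀ n : ℕ, vnormA A (R x) ^ 2 ^ n * vnormA A x ≤
      vnormA A ((R ^ 2 ^ n) x) * vnormA A x ^ 2 ^ n := by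
    intro n
    induction n with
    | zero => simp
    | succ n ih =>
      rcases (vnormA_nonneg A x).eq_or_lt with h0 | h0
      · simp [← h0]
      refine le_of_mul_le_mul_right ?_ h0
      have h1 := pow_le_pow_left₀ (by have := vnormA_nonneg A (R x); positivity) ih 2
      have h2 := mul_le_mul_of_nonneg_right (hstep (2 ^ n)) (sq_nonneg (vnormA A x ^ 2 ^ n))
      rw [pow_succ' 2 n]
      simp only [mul_comm 2 (2 ^ n), pow_mul] at h1 h2 ⊢
      nlinarith
  refine le_of_pow_two_pow_le (C := √‖A‖ * ‖x‖ / vnormA A x)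
    (mul_nonneg (norm_nonneg R) (vnormA_nonneg A x)) fun n => ?_
  rcases (vnormA_nonneg A x).eq_or_lt with h0 | h0
  · have h1 := hstep 1
    rw [← h0, mul_zero, pow_one] at h1
    have h2 : vnormA A (R x) = 0 := by
      exact pow_eq_zero_iff two_ne_zero |>.1 (le_antisymm h1 (sq_nonneg _))
    simp [← h0, h2]
  · rw [div_mul_eq_mul_div, le_div_iff₀ h0]
    refine (hiter n).trans ?_
    have h3 : vnormA A ((R ^ 2 ^ n) x) ≤ √‖A‖ * (‖R‖ ^ 2 ^ n * ‖x‖) := by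
      refine (vnormA_le_norm A _).trans ?_
      gcongr
      refine ((R ^ 2 ^ n).le_opNorm x).trans ?_
      gcongr
      exact norm_pow_le' R (by positivity)
    calc _ ≤ √‖A‖ * (‖R‖ ^ 2 ^ n * ‖x‖) * vnormA A x ^ 2 ^ n := by gcongr
      _ = _ := by rw [mul_pow]; ring

/-- An operator with an `A`-adjoint is bounded for the seminorm of `A`. -/
theorem exists_vnormA_apply_le {A T X : H →L[ℂ] H} (hA : A.IsPositive)
    (hT : ∀ u v, innA A (T u) v = innA A u (X v)) :
    ∃ C : ℝ, ∀ x, vnormA A (T x) ≤ C * vnormA A x := by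
  have hT' : ∀ u v, innA A (X u) v = innA A u (T v) := fun u v => by
    rw [← innA_conj_symm hA, ← hT, innA_conj_symm hA]
  refine ⟨√‖X * T‖, fun x => ?_⟩
  have hx := vnormA_nonneg A x
  refine le_of_sq_le_sq ?_ (mul_nonneg (Real.sqrt_nonneg _) hx)
  have h1 := vnormA_apply_le_of_selfadjoint (R := X * T) hA
    (fun u v => by simp only [mul_apply_eq_comp]; rw [hT', hT]) x
  rw [mul_pow, Real.sq_sqrt (norm_nonneg _), vnormA_sq hA, hT, re_innA_comm hA]
  exact (re_innA_le hA ((X * T) x) x).trans (by nlinarith)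

theorem norm_innA_apply_le_wA {A T X : H →L[ℂ] H} (hA : A.IsPositive)
    (hT : ∀ u v, innA A (T u) v = innA A u (X v)) (x : H) :
    ‖innA A (T x) x‖ ≤ wA A T * vnormA A x ^ 2 := by
  obtain ⟨C, hC⟩ := exists_vnormA_apply_le hA hT
  rcases (vnormA_nonneg A x).eq_or_lt with h0 | h0
  · have := norm_innA_le hA (T x) x
    rw [← h0] at this ⊢
    simpa using this
  have hbdd : BddAbove {c : ℝ | ∃ x : H, vnormA A x = 1 ∧ c = ‖innA A (T x) x‖} := by
    refine ⟨C, ?_⟩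
    rintro _ ⟨y, hy, rfl⟩
    have h1 := norm_innA_le hA (T y) y
    have h2 := hC y
    rw [hy, mul_one] at h1 h2
    exact h1.trans h2
  have hn : ‖((vnormA A x)⁻¹ : ℂ)‖ = (vnormA A x)⁻¹ := by
    rw [norm_inv, Complex.norm_real, Real.norm_of_nonneg h0.le]
  have h1 := le_csSup hbdd ⟨((vnormA A x)⁻¹ : ℂ) • x,
    by rw [vnormA_smul, hn, inv_mul_cancel₀ h0.ne'], rfl⟩
  rw [map_smul, innA_smul_left, innA_smul_right, norm_mul, norm_mul, RCLike.norm_conj, hn,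
    ← mul_assoc, ← sq, inv_pow, inv_mul_le_iff₀ (by positivity), mul_comm] at h1
  exact h1

theorem vnormA_apply_le_opNormA {A T X : H →L[ℂ] H} (hA : A.IsPositive)
    (hT : ∀ u v, innA A (T u) v = innA A u (X v)) (x : H) :
    vnormA A (T x) ≤ opNormA A T * vnormA A x := by
  obtain ⟨C, hC⟩ := exists_vnormA_apply_le hA hT
  rcases (vnormA_nonneg A x).eq_or_lt with h0 | h0
  · have := hC x
    rw [← h0] at this ⊢
    simpa using this
  have hbdd : BddAbove {c : ℝ | ∃ x : H, vnormA A x = 1 ∧ c = vnormA A (T x)} := by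
    refine ⟨C, ?_⟩
    rintro _ ⟨y, hy, rfl⟩
    simpa [hy] using hC y
  have hn : ‖((vnormA A x)⁻¹ : ℂ)‖ = (vnormA A x)⁻¹ := by
    rw [norm_inv, Complex.norm_real, Real.norm_of_nonneg h0.le]
  have h1 := le_csSup hbdd ⟨((vnormA A x)⁻¹ : ℂ) • x,
    by rw [vnormA_smul, hn, inv_mul_cancel₀ h0.ne'], rfl⟩
  rw [map_smul, vnormA_smul, hn, inv_mul_le_iff₀ h0, mul_comm] at h1
  exact h1

theorem wA_nonneg (A T : H →L[ℂ] H) : 0 ≤ wA A T :=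
  Real.sSup_nonneg (by rintro _ ⟨x, -, rfl⟩; exact norm_nonneg _)

theorem opNormA_nonneg (A T : H →L[ℂ] H) : 0 ≤ opNormA A T :=
  Real.sSup_nonneg (by rintro _ ⟨x, -, rfl⟩; exact vnormA_nonneg _ _)

/-- If `x` almost maximises the form of the `A`-real part `(TS + S♯T♯) / 2`, then `x` is almost an
eigenvector of `M = TS + S♯T♯`, hence `(S x, T♯ x)` is almost an eigenvector of the operator
matrix `((ST, SS♯), (T♯T, T♯S♯))`, whose form is controlled by `a` and `K`. -/
theorem gap_mul_le_of_almost_maximal {A T T' S S' : H →L[ℂ] H} (hA : A.IsPositive)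
    (hT : ∀ u v, innA A (T u) v = innA A u (T' v))
    (hS : ∀ u v, innA A (S u) v = innA A u (S' v))
    {w a K C ε : ℝ} (hw0 : 0 ≤ w) (hK0 : 0 ≤ K)
    (hw : ∀ z, ‖innA A (T (S z)) z‖ ≤ w * vnormA A z ^ 2)
    (ha : ∀ z, ‖innA A (S (T z)) z‖ ≤ a * vnormA A z ^ 2)
    (hK : ∀ z, vnormA A (S (S' z) + T' (T z)) ≤ K * vnormA A z)
    (hC : ∀ z, vnormA A (S' (S z) + T (T' z)) ≤ C * vnormA A z)
    {x : H} (hx : vnormA A x = 1) (hε : 0 ≤ ε) (hmax : w - ε ≤ (innA A (T (S x)) x).re)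
    (hgap : 0 ≤ 2 * w - (a + K / 2)) :
    (2 * w - (a + K / 2)) * (2 * w - 2 * ε) ≤ C * √(8 * ε * w) := by
  have hT' : ∀ u v, innA A (T' u) v = innA A u (T v) := fun u v => by
    rw [← innA_conj_symm hA, ← hT, innA_conj_symm hA]
  have hS' : ∀ u v, innA A (S' u) v = innA A u (S v) := fun u v => by
    rw [← innA_conj_symm hA, ← hS, innA_conj_symm hA]
  let P : H →L[ℂ] H := ((2 * w : ℝ) : ℂ) • (1 : H →L[ℂ] H) - (T * S + S' * T')
  have hP : ∀ z, P z = ((2 * w : ℝ) : ℂ) • z - (T (S z) + S' (T' z)) := fun z => rfl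
  have hPre : ∀ z, (innA A (P z) z).re = 2 * w * vnormA A z ^ 2 - 2 * (innA A (T (S z)) z).re := by
    intro z
    rw [hP, innA_sub_left, innA_add_left, innA_smul_left, Complex.conj_ofReal, Complex.sub_re,
      Complex.add_re, Complex.re_ofReal_mul, vnormA_sq hA, hS', hT', re_innA_comm hA z (T (S z))]
    ring
  have hBP : (A * P).IsPositive := by
    refine ⟨fun u v => ?_, fun z => ?_⟩
    · change innA A (P u) v = inner ℂ u (A (P v))
      rw [← hA.inner_left_eq_inner_right]
      change _ = innA A u (P v)
      rw [← innA_conj_symm hA u (P v)]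
      simp only [hP, innA_sub_left, innA_add_left, innA_smul_left, map_sub, map_add, map_mul,
        innA_conj_symm hA, Complex.conj_ofReal]
      rw [hT, hS, hS', hT']
      ring
    · change 0 ≤ (innA A (P z) z).re
      have := (Complex.re_le_norm _).trans (hw z)
      rw [hPre]
      linarith
  set d := P x with hd
  have hd2 : vnormA A d ≤ √(8 * ε * w) := by
    have h1 : ‖innA A d d‖ ^ 2 ≤ (innA A (P x) x).re * (innA A (P d) d).re :=
      norm_innA_sq_le hBP x d
    have h2 : vnormA A d ^ 2 ≤ ‖innA A d d‖ := by
      rw [vnormA_sq hA]; exact Complex.re_le_norm _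
    have h3 : (innA A (P x) x).re ≤ 2 * ε := by rw [hPre, hx]; linarith
    have h4 : (innA A (P d) d).re ≤ 4 * w * vnormA A d ^ 2 := by
      have := (abs_le.1 ((Complex.abs_re_le_norm _).trans (hw d))).1
      rw [hPre]; linarith
    have h5 : 0 ≤ (innA A (P d) d).re := hBP.re_inner_nonneg_left d
    have h6 : (vnormA A d ^ 2) ^ 2 ≤ (8 * ε * w) * vnormA A d ^ 2 :=
      calc (vnormA A d ^ 2) ^ 2 ≤ ‖innA A d d‖ ^ 2 := by gcongr
        _ ≤ _ := h1
        _ ≤ (2 * ε) * (4 * w * vnormA A d ^ 2) := by gcongr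
        _ = _ := by ring
    refine Real.le_sqrt_of_sq_le ?_
    rcases (sq_nonneg (vnormA A d)).eq_or_lt with h0 | h0
    · rw [← h0]; positivity
    · rw [sq (vnormA A d ^ 2)] at h6
      exact le_of_mul_le_mul_right h6 h0
  set p := S x with hp
  set q := T' x with hq
  have hSd : S d = ((2 * w : ℝ) : ℂ) • p - (S (T p) + S (S' q)) := by
    rw [hd, hP, map_sub, map_add, map_smul]
  have hTd : T' d = ((2 * w : ℝ) : ℂ) • q - (T' (T p) + T' (S' q)) := by
    rw [hd, hP, map_sub, map_add, map_smul]
  have hident : (innA A d (S' p + T q)).re =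
      2 * w * (vnormA A p ^ 2 + vnormA A q ^ 2) - (innA A (S (T p)) p).re
        - (innA A (S (T q)) q).re - (innA A (S (S' p) + T' (T p)) q).re := by
    rw [innA_add_right, ← hS, ← hT', hSd, hTd]
    simp only [innA_sub_left, innA_add_left, innA_smul_left, Complex.conj_ofReal, Complex.sub_re,
      Complex.add_re, Complex.re_ofReal_mul, vnormA_sq hA]
    rw [hT' (S' q) q, hS' q (T q), re_innA_comm hA q (S (T q)), hS (S' q) p, hS (S' p) q,
      re_innA_comm hA (S' q) (S' p)]
    ring
  have hbound : (innA A d (S' p + T q)).re ≤ C * √(8 * ε * w) := by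
    refine (re_innA_le hA _ _).trans ?_
    have h1 := hC x
    rw [hx, mul_one] at h1
    calc _ ≤ √(8 * ε * w) * C := by gcongr; exact vnormA_nonneg _ _
      _ = _ := mul_comm _ _
  have h1 := (Complex.re_le_norm _).trans (ha p)
  have h2 := (Complex.re_le_norm _).trans (ha q)
  have h3 : (innA A (S (S' p) + T' (T p)) q).re ≤ K / 2 * (vnormA A p ^ 2 + vnormA A q ^ 2) := by
    refine (re_innA_le hA _ _).trans ?_
    have := mul_le_mul_of_nonneg_right (hK p) (vnormA_nonneg A q)
    nlinarith [mul_nonneg hK0 (sq_nonneg (vnormA A p - vnormA A q))]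
  have h4 : 2 * w - 2 * ε ≤ vnormA A p ^ 2 + vnormA A q ^ 2 := by
    have := re_innA_le hA p q
    rw [hq, ← hT] at this
    nlinarith [sq_nonneg (vnormA A p - vnormA A q)]
  calc _ ≤ (2 * w - (a + K / 2)) * (vnormA A p ^ 2 + vnormA A q ^ 2) := by gcongr
    _ ≤ _ := by linarith

theorem exists_norm_eq_one_conj_mul_eq_norm (z : ℂ) :
    ∃ c : ℂ, ‖c‖ = 1 ∧ starRingEnd ℂ c * z = ‖z‖ := by
  rcases eq_or_ne z 0 with rfl | hz
  · exact ⟨1, by simp⟩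
  · have hz' : (‖z‖ : ℂ) ≠ 0 := by simpa using hz
    refine ⟨z / ‖z‖, by simp [hz], ?_⟩
    rw [map_div₀, Complex.conj_ofReal, div_mul_eq_mul_div, Complex.conj_mul', sq,
      mul_div_assoc, div_self hz', mul_one]

theorem stmt2 (A : H →L[ℂ] H) (hA : A.IsPositive) (hA0 : A ≠ 0)
    (T S Tsharp Ssharp : H →L[ℂ] H)
    (hT : IsReducedAAdjoint A T Tsharp) (hS : IsReducedAAdjoint A S Ssharp) :
    wA A (T * S) ≤ (1 / 2) * wA A (S * T) +
      (1 / 4) * opNormA A (S * Ssharp + Tsharp * T) := by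
  have hTa := hT.innA_apply_left hA
  have hSa := hS.innA_apply_left hA
  have hTa' : ∀ u v, innA A (Tsharp u) v = innA A u (T v) := fun u v => by
    rw [← innA_conj_symm hA, ← hTa, innA_conj_symm hA]
  have hSa' : ∀ u v, innA A (Ssharp u) v = innA A u (S v) := fun u v => by
    rw [← innA_conj_symm hA, ← hSa, innA_conj_symm hA]
  have hw := norm_innA_apply_le_wA (T := T * S) (X := Ssharp * Tsharp) hA
    (fun u v => by simp only [mul_apply_eq_comp]; rw [hTa, hSa])
  have ha := norm_innA_apply_le_wA (T := S * T) (X := Tsharp * Ssharp) hA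
    (fun u v => by simp only [mul_apply_eq_comp]; rw [hSa, hTa])
  have hK := vnormA_apply_le_opNormA (T := S * Ssharp + Tsharp * T)
    (X := S * Ssharp + Tsharp * T) hA
    (fun u v => by
      simp only [mul_apply_eq_comp, add_apply, innA_add_left, innA_add_right]
      rw [hSa, hSa', hTa', hTa])
  obtain ⟨C, hC⟩ := exists_vnormA_apply_le (T := Ssharp * S + T * Tsharp)
    (X := Ssharp * S + T * Tsharp) hA
    (fun u v => by
      simp only [mul_apply_eq_comp, add_apply, innA_add_left, innA_add_right]
      rw [hSa', hSa, hTa, hTa'])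
  have ha0 := wA_nonneg A (S * T)
  have hK0 := opNormA_nonneg A (S * Ssharp + Tsharp * T)
  have hw0 := wA_nonneg A (T * S)
  set w := wA A (T * S) with hwdef
  set a := wA A (S * T)
  set K := opNormA A (S * Ssharp + Tsharp * T)
  by_contra! hlt
  have hgap : 0 < 2 * w - (a + K / 2) := by linarith
  have hwpos : 0 < w := by linarith
  have hne : {c : ℝ | ∃ x : H, vnormA A x = 1 ∧ c = ‖innA A ((T * S) x) x‖}.Nonempty := by
    by_contra hempty
    rw [Set.not_nonempty_iff_eq_empty] at hempty
    rw [hwdef, wA, hempty, Real.sSup_empty] at hwpos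
    exact hwpos.false
  have key : ∀ ε : ℝ, 0 < ε →
      (2 * w - (a + K / 2)) * (2 * w - 2 * ε) ≤ C * √(8 * ε * w) := by
    intro ε hε
    obtain ⟨_, ⟨x, hx, rfl⟩, hlarge⟩ :=
      exists_lt_of_lt_csSup hne (show w - ε < wA A (T * S) by linarith)
    obtain ⟨c, hc, hcz⟩ := exists_norm_eq_one_conj_mul_eq_norm (innA A ((T * S) x) x)
    have hcc : starRingEnd ℂ c * c = 1 := by simp [Complex.conj_mul', hc]
    have hcc' : c * starRingEnd ℂ c = 1 := by rw [mul_comm, hcc]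
    refine gap_mul_le_of_almost_maximal (T := c • T) (T' := starRingEnd ℂ c • Tsharp) (S := S)
      (S' := Ssharp) hA (fun u v => ?_) hSa hw0 hK0 (fun z => ?_) (fun z => ?_) (fun z => ?_)
      (C := C) (fun z => ?_) hx hε.le ?_ hgap.le
    · simp only [smul_apply]
      rw [innA_smul_left, innA_smul_right, hTa]
    · simp only [smul_apply]
      rw [innA_smul_left, norm_mul, RCLike.norm_conj, hc, one_mul]
      exact hw z
    · simp only [smul_apply, map_smul]
      rw [innA_smul_left, norm_mul, RCLike.norm_conj, hc, one_mul]
      exact ha z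
    · simp only [smul_apply, map_smul, smul_smul, hcc', one_smul]
      exact hK z
    · simp only [smul_apply, map_smul, smul_smul, hcc, one_smul]
      exact hC z
    · simp only [smul_apply]
      rw [innA_smul_left]
      change w - ε ≤ (starRingEnd ℂ c * innA A ((T * S) x) x).re
      rw [hcz, Complex.ofReal_re]
      exact hlarge.le
  have hleft : Filter.Tendsto (fun ε : ℝ => (2 * w - (a + K / 2)) * (2 * w - 2 * ε))
      (nhdsWithin 0 (Set.Ioi 0)) (nhds ((2 * w - (a + K / 2)) * (2 * w - 2 * 0))) :=
    ((by fun_prop : Continuous fun ε : ℝ => (2 * w - (a + K / 2)) * (2 * w - 2 * ε)).tendsto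
      0).mono_left nhdsWithin_le_nhds
  have hright : Filter.Tendsto (fun ε : ℝ => C * √(8 * ε * w))
      (nhdsWithin 0 (Set.Ioi 0)) (nhds (C * √(8 * 0 * w))) :=
    ((by fun_prop : Continuous fun ε : ℝ => C * √(8 * ε * w)).tendsto
      0).mono_left nhdsWithin_le_nhds
  have hfinal := le_of_tendsto_of_tendsto hleft hright
    (Filter.eventually_of_mem self_mem_nhdsWithin fun ε hε => key ε hε)
  simp only [mul_zero, zero_mul, Real.sqrt_zero, sub_zero] at hfinal
  nlinarith [mul_pos hgap hwpos]
end
end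

section
/- Let T be a bounded linear operator on H admitting an A-adjoint. Then ω_A(T) ≤ (1/2) · sqrt( ‖T T^{♯_A} + T^{♯_A} T‖_A + 2 ω_A(T²) ) ≤ (√2/2) · sqrt( ‖T^{♯_A} T + T T^{♯_A}‖_A ). -/
noncomputable section

open ContinuousLinearMap

variable {H : Type*} [NormedAddCommGroup H] [InnerProductSpace ℂ H] [CompleteSpace H]

lemma exists_innA_eq_inner {A : H →L[ℂ] H} (hA : A.IsPositive) :
    ∃ B : H →L[ℂ] H, ∀ x y, innA A x y = inner ℂ (B x) (B y) := by
  have h0 : 0 ≤ A := (nonneg_iff_isPositive A).2 hA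
  refine ⟨CFC.sqrt A, fun x y => ?_⟩
  have hsq : CFC.sqrt A * CFC.sqrt A = A := CFC.sqrt_mul_sqrt_self A h0
  have hpos : (CFC.sqrt A).IsPositive := (nonneg_iff_isPositive _).1 (CFC.sqrt_nonneg A)
  have hsymm : inner ℂ (CFC.sqrt A (CFC.sqrt A x)) y = inner ℂ (CFC.sqrt A x) (CFC.sqrt A y) :=
    hpos.isSymmetric (CFC.sqrt A x) y
  rw [← hsymm, ← mul_apply_eq_comp, hsq, innA]

lemma vnormA_eq_norm {A B : H →L[ℂ] H} (hB : ∀ x y, innA A x y = inner ℂ (B x) (B y)) (x : H) :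
    vnormA A x = ‖B x‖ := by
  have h : (inner ℂ (B x) (B x)).re = ‖B x‖ ^ 2 := inner_self_eq_norm_sq (𝕜 := ℂ) (B x)
  rw [vnormA, hB, h, Real.sqrt_sq (norm_nonneg _)]

/-- An operator which is symmetric for the semi-inner product `⟪B x, B y⟫` is bounded for the
associated seminorm. -/
lemma norm_apply_le_of_semiSymmetric {B S : H →L[ℂ] H}
    (hS : ∀ x y, inner ℂ (B (S x)) (B y) = inner ℂ (B x) (B (S y))) {x : H} (hx : ‖B x‖ = 1) :
    ‖B (S x)‖ ≤ ‖S‖ := by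
  have hpow : ∀ (n : ℕ) (y z : H),
      inner ℂ (B ((S ^ n) y)) (B z) = inner ℂ (B y) (B ((S ^ n) z)) := by
    intro n
    induction n with
    | zero => intro y z; simp
    | succ n ih =>
      intro y z
      rw [pow_succ, mul_apply_eq_comp, ih, hS, ← pow_succ, pow_succ', mul_apply_eq_comp]
  have hstep : ∀ n : ℕ, ‖B ((S ^ n) x)‖ ^ 2 ≤ ‖B ((S ^ (n * 2)) x)‖ := by
    intro n
    have h : inner ℂ (B ((S ^ n) x)) (B ((S ^ n) x)) = inner ℂ (B x) (B ((S ^ (n * 2)) x)) := by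
      rw [hpow, mul_two, pow_add, mul_apply_eq_comp]
    calc ‖B ((S ^ n) x)‖ ^ 2 = ‖inner ℂ (B ((S ^ n) x)) (B ((S ^ n) x))‖ := by
          rw [inner_self_eq_norm_sq_to_K]; simp
      _ ≤ ‖B x‖ * ‖B ((S ^ (n * 2)) x)‖ := by rw [h]; exact norm_inner_le_norm _ _
      _ = ‖B ((S ^ (n * 2)) x)‖ := by rw [hx, one_mul]
  have hiter : ∀ n : ℕ, ‖B (S x)‖ ^ (2 ^ n) ≤ ‖B ((S ^ (2 ^ n)) x)‖ := by
    intro n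
    induction n with
    | zero => simp
    | succ n ih =>
      rw [pow_succ, pow_mul]
      exact (pow_le_pow_left₀ (by positivity) ih 2).trans (hstep _)
  have hbound : ∀ n : ℕ, ‖B (S x)‖ ^ (2 ^ n) ≤ ‖B‖ * ‖x‖ * ‖S‖ ^ (2 ^ n) := by
    intro n
    calc ‖B (S x)‖ ^ (2 ^ n) ≤ ‖B ((S ^ (2 ^ n)) x)‖ := hiter n
      _ ≤ ‖B‖ * (‖S ^ (2 ^ n)‖ * ‖x‖) :=
          (B.le_opNorm _).trans (by gcongr; exact le_opNorm _ _)
      _ ≤ ‖B‖ * (‖S‖ ^ (2 ^ n) * ‖x‖) := by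
          gcongr; exact norm_pow_le' S (by positivity)
      _ = ‖B‖ * ‖x‖ * ‖S‖ ^ (2 ^ n) := by ring
  by_contra! hlt
  have hpos : 0 < ‖B (S x)‖ := (norm_nonneg S).trans_lt hlt
  rcases (norm_nonneg S).eq_or_lt with h0 | h0
  · have h := hbound 0
    rw [← h0] at h
    simp only [pow_zero, pow_one, mul_zero] at h
    linarith
  · have hratio : 1 < ‖B (S x)‖ / ‖S‖ := (one_lt_div h0).2 hlt
    obtain ⟨n, hn⟩ := pow_unbounded_of_one_lt (‖B‖ * ‖x‖) hratio
    have hle := pow_le_pow_right₀ hratio.le (Nat.lt_two_pow_self (n := n)).le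
    have h := hbound n
    rw [← div_le_iff₀ (by positivity), ← div_pow] at h
    linarith

lemma four_mul_norm_inner_sq_le {e p q : H} (he : ‖e‖ = 1) (hq : inner ℂ e q = inner ℂ p e) :
    4 * ‖(inner ℂ e p : ℂ)‖ ^ 2 ≤ ‖p‖ ^ 2 + ‖q‖ ^ 2 + 2 * ‖(inner ℂ p q : ℂ)‖ := by
  obtain ⟨u, hu, hua⟩ := RCLike.exists_norm_eq_mul_self (inner ℂ e p : ℂ)
  have hsum : (inner ℂ e (u • p + (starRingEnd ℂ u) • q) : ℂ)
      = ((2 * ‖(inner ℂ e p : ℂ)‖ : ℝ) : ℂ) := by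
    have hconj : (starRingEnd ℂ) u * inner ℂ p e = (‖(inner ℂ e p : ℂ)‖ : ℂ) := by
      rw [← inner_conj_symm p e, ← map_mul]
      exact (congrArg (starRingEnd ℂ) hua).symm.trans (Complex.conj_ofReal _)
    have hua' : u * inner ℂ e p = (‖(inner ℂ e p : ℂ)‖ : ℂ) := hua.symm
    rw [inner_add_right, inner_smul_right, inner_smul_right, hq, hconj, hua']
    push_cast
    ring
  have hle : 2 * ‖(inner ℂ e p : ℂ)‖ ≤ ‖u • p + (starRingEnd ℂ u) • q‖ := by
    have h := norm_inner_le_norm (𝕜 := ℂ) e (u • p + (starRingEnd ℂ u) • q)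
    rwa [hsum, he, one_mul, Complex.norm_real, Real.norm_of_nonneg (by positivity)] at h
  have hcross : RCLike.re (inner ℂ (u • p) ((starRingEnd ℂ u) • q) : ℂ)
      ≤ ‖(inner ℂ p q : ℂ)‖ := by
    refine (RCLike.re_le_norm _).trans_eq ?_
    rw [inner_smul_left, inner_smul_right]
    simp [hu]
  have hexp := norm_add_sq (𝕜 := ℂ) (u • p) ((starRingEnd ℂ u) • q)
  rw [norm_smul, norm_smul, RCLike.norm_conj, hu, one_mul, one_mul] at hexp
  have hsq := pow_le_pow_left₀ (by positivity) hle 2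
  linarith

theorem stmt10 (A : H →L[ℂ] H) (hA : A.IsPositive) (hA0 : A ≠ 0)
    (T Tsharp : H →L[ℂ] H) (hT : IsReducedAAdjoint A T Tsharp) :
    wA A T ≤
        (1 / 2) * Real.sqrt (opNormA A (T * Tsharp + Tsharp * T) + 2 * wA A (T * T)) ∧
      (1 / 2) * Real.sqrt (opNormA A (T * Tsharp + Tsharp * T) + 2 * wA A (T * T)) ≤
        (Real.sqrt 2 / 2) * Real.sqrt (opNormA A (Tsharp * T + T * Tsharp)) := by
  obtain ⟨B, hB⟩ := exists_innA_eq_inner hA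
  have hn := vnormA_eq_norm hB
  have hadj : ∀ x y, (inner ℂ (B (Tsharp x)) (B y) : ℂ) = inner ℂ (B x) (B (T y)) := by
    intro x y
    have h : A (Tsharp x) = adjoint T (A x) := DFunLike.congr_fun hT.1 x
    rw [← hB, ← hB, innA, h, adjoint_inner_left, innA]
  have hadj' : ∀ x y, (inner ℂ (B (T x)) (B y) : ℂ) = inner ℂ (B x) (B (Tsharp y)) := by
    intro x y
    rw [← inner_conj_symm, ← hadj, inner_conj_symm]
  set P := T * Tsharp + Tsharp * T with hP
  have hPapp : ∀ x, B (P x) = B (T (Tsharp x)) + B (Tsharp (T x)) := fun x => by simp [hP]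
  have hPsymm : ∀ x y, (inner ℂ (B (P x)) (B y) : ℂ) = inner ℂ (B x) (B (P y)) := by
    intro x y
    simp only [hPapp, inner_add_left, inner_add_right, hadj, hadj']
  have hPbdd : BddAbove {c : ℝ | ∃ x : H, vnormA A x = 1 ∧ c = vnormA A (P x)} := by
    refine ⟨‖P‖, ?_⟩
    rintro c ⟨x, hx, rfl⟩
    rw [hn] at hx ⊢
    exact norm_apply_le_of_semiSymmetric hPsymm hx
  have hsum : ∀ x, ‖B x‖ = 1 → ‖B (T x)‖ ^ 2 + ‖B (Tsharp x)‖ ^ 2 ≤ opNormA A P := by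
    intro x hx
    have hPx : ‖B (P x)‖ ≤ opNormA A P :=
      le_csSup hPbdd ⟨x, by rw [hn, hx], by rw [hn]⟩
    have hre : RCLike.re (inner ℂ (B (P x)) (B x) : ℂ)
        = ‖B (T x)‖ ^ 2 + ‖B (Tsharp x)‖ ^ 2 := by
      rw [hPapp, inner_add_left, hadj, hadj', map_add, inner_self_eq_norm_sq,
        inner_self_eq_norm_sq, add_comm]
    have hcs := re_inner_le_norm (𝕜 := ℂ) (B (P x)) (B x)
    rw [hre, hx, mul_one] at hcs
    exact hcs.trans hPx
  have hTT : ∀ x, ‖innA A ((T * T) x) x‖ = ‖(inner ℂ (B (T x)) (B (Tsharp x)) : ℂ)‖ := by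
    intro x
    rw [hB, mul_apply_eq_comp, hadj']
  have hTTle : ∀ x, vnormA A x = 1 → ‖innA A ((T * T) x) x‖ ≤ opNormA A P / 2 := by
    intro x hx
    rw [hn] at hx
    rw [hTT]
    have hcs := norm_inner_le_norm (𝕜 := ℂ) (B (T x)) (B (Tsharp x))
    linarith [hsum x hx, two_mul_le_add_sq ‖B (T x)‖ ‖B (Tsharp x)‖]
  have hP0 : 0 ≤ opNormA A P := by
    refine Real.sSup_nonneg ?_
    rintro c ⟨x, -, rfl⟩
    exact Real.sqrt_nonneg _
  have hTTbdd : BddAbove {c : ℝ | ∃ x : H, vnormA A x = 1 ∧ c = ‖innA A ((T * T) x) x‖} := by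
    refine ⟨opNormA A P / 2, ?_⟩
    rintro c ⟨x, hx, rfl⟩
    exact hTTle x hx
  have hwTT : wA A (T * T) ≤ opNormA A P / 2 := by
    refine Real.sSup_le ?_ (by positivity)
    rintro c ⟨x, hx, rfl⟩
    exact hTTle x hx
  constructor
  · refine Real.sSup_le ?_ (by positivity)
    rintro c ⟨x, hx, rfl⟩
    have hx' := hx
    rw [hn] at hx'
    have hw : ‖(inner ℂ (B (T x)) (B (Tsharp x)) : ℂ)‖ ≤ wA A (T * T) := by
      rw [← hTT]
      exact le_csSup hTTbdd ⟨x, hx, rfl⟩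
    have hkey := four_mul_norm_inner_sq_le hx' (hadj' x x).symm
    have hle : 2 * ‖(inner ℂ (B x) (B (T x)) : ℂ)‖
        ≤ Real.sqrt (opNormA A P + 2 * wA A (T * T)) :=
      Real.le_sqrt_of_sq_le (by linarith [hsum x hx'])
    rw [hB, norm_inner_symm]
    linarith
  · rw [add_comm (Tsharp * T), ← hP, div_mul_eq_mul_div (Real.sqrt 2), ← Real.sqrt_mul zero_le_two]
    have h := Real.sqrt_le_sqrt (show opNormA A P + 2 * wA A (T * T) ≤ 2 * opNormA A P by linarith)
    linarith
end
end
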